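/- Let d ≥ 2n and Ω : M_{d,n}(ℝ) → ℝ be differentiable. Suppose Ω(W + P) ≥ Ω(W) for all W, P with Wᵀ P = 0. Then there exists a matrix nondecreasing function h : S⁺ₙ → ℝ such that Ω(W) = h(Wᵀ W) for all W ∈ M_{d,n}(ℝ). -/

import Mathlib

open Matrix

attribute [local instance] Matrix.frobeniusNormedAddCommGroup Matrix.frobeniusNormedSpace

/-!
If `Wᵀ * P = 0`, then `t ↦ Ω (W + t • P)` is minimal at `0`, so `Ω` is constant along every path
`γ` with `(γ t)ᵀ * γ' t = 0`. When `W` has more rows than columns, some `u ≠ 0` is orthogonal to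
the columns of `W`; reflecting `W` in the hyperplanes orthogonal to the vectors of the segment from
`u` to `v` gives such a path, from `W` itself to the reflection of `W` defined by `v`. Hence `Ω` is
invariant under reflections. Two matrices with the same Gram matrix differ by a product of
reflections, one for each column, so `Ω W` depends only on `Wᵀ * W`. Adding `vecMulVec u x` to `W`,
with `u` a unit vector orthogonal to its columns, adds `vecMulVec x x` to the Gram matrix and does
not decrease `Ω`; every positive semidefinite increment is a sum of such terms.
-/

section Householder

variable {K m n : Type*} [Field K] [Fintype m] [DecidableEq m]

/-- The Householder matrix of the reflection in the hyperplane orthogonal to `v`. It is the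
identity when `v ⬝ᵥ v = 0`, by the convention `2 / 0 = 0`. -/
def householder (v : m → K) : Matrix m m K :=
  1 - (2 / (v ⬝ᵥ v)) • vecMulVec v v

lemma householder_mulVec (v x : m → K) :
    householder v *ᵥ x = x - (2 / (v ⬝ᵥ v) * (v ⬝ᵥ x)) • v := by
  rw [householder, sub_mulVec, one_mulVec, smul_mulVec, vecMulVec_mulVec, op_smul_eq_smul,
    smul_smul]

lemma householder_mulVec_of_dotProduct_eq_zero {v x : m → K} (h : v ⬝ᵥ x = 0) :
    householder v *ᵥ x = x := by
  rw [householder_mulVec, h, mul_zero, zero_smul, sub_zero]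

lemma householder_mul_of_vecMul_eq_zero {v : m → K} {W : Matrix m n K} (h : v ᵥ* W = 0) :
    householder v * W = W :=
  ext_col fun j => householder_mulVec_of_dotProduct_eq_zero congr($h j)

lemma transpose_householder (v : m → K) : (householder v)ᵀ = householder v := by
  simp only [householder, transpose_sub, transpose_one, transpose_smul, transpose_vecMulVec]

lemma householder_mul_self (v : m → K) : householder v * householder v = 1 := by
  simp only [householder, Matrix.mul_sub, Matrix.sub_mul, Matrix.mul_one, Matrix.one_mul,
    Matrix.smul_mul, Matrix.mul_smul, vecMulVec_mul_vecMulVec, vecMulVec_smul]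
  by_cases hv : v ⬝ᵥ v = 0
  · simp only [hv, div_zero, zero_smul, sub_zero]
  · rw [smul_smul (2 / _) (v ⬝ᵥ v), div_mul_cancel₀ _ hv]
    module

lemma transpose_householder_mul_mul (v : m → K) (W Z : Matrix m n K) :
    (householder v * W)ᵀ * (householder v * Z) = Wᵀ * Z := by
  rw [transpose_mul, transpose_householder, Matrix.mul_assoc, ← Matrix.mul_assoc (householder v),
    householder_mul_self, Matrix.one_mul]

lemma householder_sub_mulVec [LinearOrder K] [IsStrictOrderedRing K] {x y : m → K}
    (h : x ⬝ᵥ x = y ⬝ᵥ y) : householder (x - y) *ᵥ x = y := by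
  by_cases hxy : (x - y) ⬝ᵥ (x - y) = 0
  · obtain rfl : x = y := sub_eq_zero.1 (dotProduct_self_eq_zero.1 hxy)
    rw [sub_self, householder_mulVec_of_dotProduct_eq_zero (zero_dotProduct x)]
  · have hnormSq : (x - y) ⬝ᵥ (x - y) = 2 * ((x - y) ⬝ᵥ x) := by
      simp only [dotProduct_sub, sub_dotProduct, h, dotProduct_comm y x]
      ring
    rw [householder_mulVec, div_mul_eq_mul_div, ← hnormSq, div_self hxy, one_smul,
      sub_sub_cancel]

lemma apply_eq_of_forall_apply_householder_mul_eq [LinearOrder K] [IsStrictOrderedRing K]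
    [Finite n] {α : Type*} {f : Matrix m n K → α}
    (hf : ∀ (v : m → K) (W : Matrix m n K), f (householder v * W) = f W)
    {W Z : Matrix m n K} (hWZ : Wᵀ * W = Zᵀ * Z) : f W = f Z := by
  classical
  have := Fintype.ofFinite n
  suffices hagree : ∀ (s : Finset n) (W : Matrix m n K), Wᵀ * W = Zᵀ * Z →
      (∀ j ∉ s, W.col j = Z.col j) → f W = f Z from
    hagree Finset.univ W hWZ fun j hj => absurd (Finset.mem_univ j) hj
  intro s
  induction s using Finset.induction_on with
  | empty => exact fun W _ hcol => congrArg f (ext_col fun j => hcol j (Finset.notMem_empty j))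
  | insert k s _ ih =>
    intro W hWZ hcol
    have hgram (i j : n) : W.col i ⬝ᵥ W.col j = Z.col i ⬝ᵥ Z.col j := congr($hWZ i j)
    rw [← hf (W.col k - Z.col k)]
    refine ih _ ((transpose_householder_mul_mul _ W W).trans hWZ) fun j hj => ?_
    change householder (W.col k - Z.col k) *ᵥ W.col j = Z.col j
    by_cases hjk : j = k
    · subst hjk
      exact householder_sub_mulVec (hgram j j)
    · have hWZj : W.col j = Z.col j := hcol j (by simp [hjk, hj])
      have horth : (W.col k - Z.col k) ⬝ᵥ W.col j = 0 := by
        rw [sub_dotProduct, hgram, hWZj, sub_self]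
      rw [householder_mulVec_of_dotProduct_eq_zero horth, hWZj]

end Householder

-- A path of orthogonal matrices `H` has derivative `H * S` with `S` skew-symmetric.
lemma hasDerivAt_householder {m : Type*} [Fintype m] [DecidableEq m] {c : ℝ → m → ℝ} {c' : m → ℝ}
    {t : ℝ} (hc : HasDerivAt c c' t) (h0 : c t ≠ 0) :
    HasDerivAt (fun s => householder (c s)) (householder (c t) *
      ((2 / (c t ⬝ᵥ c t)) • (vecMulVec (c t) c' - vecMulVec c' (c t)))) t := by
  have hq0 : c t ⬝ᵥ c t ≠ 0 := fun h => h0 (dotProduct_self_eq_zero.1 h)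
  have hentry := hasDerivAt_pi.1 hc
  have hq : HasDerivAt (fun s => c s ⬝ᵥ c s) (2 * (c t ⬝ᵥ c')) t := by
    refine (HasDerivAt.fun_sum fun i _ => (hentry i).mul (hentry i)).congr_deriv ?_
    simp only [dotProduct, Finset.mul_sum]
    exact Finset.sum_congr rfl fun i _ => by ring
  refine hasDerivAt_pi.2 fun i => hasDerivAt_pi.2 fun j => ?_
  refine ((((hasDerivAt_const t 2).div hq hq0).mul
    ((hentry i).mul (hentry j))).const_sub ((1 : Matrix m m ℝ) i j)).congr_deriv ?_
  simp only [householder, Matrix.mul_smul, Matrix.mul_sub, Matrix.sub_mul, Matrix.smul_mul,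
    Matrix.one_mul, vecMulVec_mul_vecMulVec, zero_mul, zero_sub, Pi.mul_apply, Pi.div_apply,
    neg_add_rev, vecMulVec_smul, Matrix.smul_apply, Matrix.sub_apply, vecMulVec_apply, smul_eq_mul]
  field_simp
  ring

lemma hasDerivAt_matrix_mul_const {l m n : Type*} [Finite l] [Fintype m] [Finite n]
    {F : ℝ → Matrix l m ℝ} {F' : Matrix l m ℝ} {t : ℝ} (hF : HasDerivAt F F' t)
    (W : Matrix m n ℝ) : HasDerivAt (fun s => F s * W) (F' * W) t := by
  have := Fintype.ofFinite l
  have := Fintype.ofFinite n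
  exact hasDerivAt_pi.2 fun i => hasDerivAt_pi.2 fun j => HasDerivAt.fun_sum fun k _ =>
    (hasDerivAt_pi.1 (hasDerivAt_pi.1 hF i) k).mul_const (W k j)

lemma exists_ne_zero_vecMul_eq_zero {K m n : Type*} [Field K] [Fintype m] [Fintype n]
    (hcard : Fintype.card n < Fintype.card m) (W : Matrix m n K) : ∃ u ≠ 0, u ᵥ* W = 0 := by
  have hker : LinearMap.ker W.vecMulLinear ≠ ⊥ :=
    LinearMap.ker_ne_bot_of_finrank_lt (by simpa only [Module.finrank_fintype_fun_eq_card])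
  obtain ⟨u, hu, hu0⟩ := (Submodule.ne_bot_iff _).1 hker
  exact ⟨u, hu0, hu⟩

lemma exists_dotProduct_self_eq_one_vecMul_eq_zero {m n : Type*} [Fintype m] [Fintype n]
    (hcard : Fintype.card n < Fintype.card m) (W : Matrix m n ℝ) :
    ∃ u, u ⬝ᵥ u = 1 ∧ u ᵥ* W = 0 := by
  obtain ⟨u, hu0, huW⟩ := exists_ne_zero_vecMul_eq_zero hcard W
  have huu : 0 < u ⬝ᵥ u := dotProduct_star_self_pos_iff.2 hu0
  refine ⟨(√(u ⬝ᵥ u))⁻¹ • u, ?_, by rw [smul_vecMul, huW, smul_zero]⟩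
  rw [smul_dotProduct, dotProduct_smul, smul_smul, smul_eq_mul, ← mul_inv,
    Real.mul_self_sqrt huu.le, inv_mul_cancel₀ huu.ne']

lemma transpose_add_mul_add_of_transpose_mul_eq_zero {R m n : Type*} [CommSemiring R] [Fintype m]
    {W P : Matrix m n R} (h : Wᵀ * P = 0) : (W + P)ᵀ * (W + P) = Wᵀ * W + Pᵀ * P := by
  have h' : Pᵀ * W = 0 := by
    simpa only [transpose_mul, transpose_transpose, transpose_zero] using congrArg transpose h
  rw [transpose_add, Matrix.add_mul, Matrix.mul_add, Matrix.mul_add, h, h', add_zero, zero_add]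

/-- Monotonicity under perturbations with columns orthogonal to those of `W`: the hypothesis under
which the regularizer `Ω` is shown to depend monotonically on the Gram matrix `Wᵀ * W`. -/
def OrthogonallyMonotone {m n : Type*} [Fintype m] (Ω : Matrix m n ℝ → ℝ) : Prop :=
  ∀ W P : Matrix m n ℝ, Wᵀ * P = 0 → Ω W ≤ Ω (W + P)

namespace OrthogonallyMonotone

variable {m n : Type*} [Fintype m] {Ω : Matrix m n ℝ → ℝ}

lemma fderiv_apply_eq_zero [Finite n] (hΩ : OrthogonallyMonotone Ω) {W P : Matrix m n ℝ}
    (hdiff : DifferentiableAt ℝ Ω W) (hWP : Wᵀ * P = 0) : fderiv ℝ Ω W P = 0 := by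
  have := Fintype.ofFinite n
  have hmin : IsLocalMin (fun t : ℝ => Ω (W + t • P)) 0 := by
    refine Filter.Eventually.of_forall fun t => ?_
    simpa only [zero_smul, add_zero] using
      hΩ W (t • P) (by rw [Matrix.mul_smul, hWP, smul_zero])
  exact hmin.hasDerivAt_eq_zero (hdiff.hasFDerivAt.hasLineDerivAt P)

lemma apply_eq_of_transpose_mul_deriv_eq_zero [Finite n] (hΩ : OrthogonallyMonotone Ω)
    (hdiff : Differentiable ℝ Ω) {γ γ' : ℝ → Matrix m n ℝ} (hγ : ∀ t, HasDerivAt γ (γ' t) t)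
    (horth : ∀ t, (γ t)ᵀ * γ' t = 0) (a b : ℝ) : Ω (γ a) = Ω (γ b) := by
  have := Fintype.ofFinite n
  have hderiv (t : ℝ) : HasDerivAt (Ω ∘ γ) 0 t :=
    ((hdiff (γ t)).hasFDerivAt.comp_hasDerivAt t (hγ t)).congr_deriv
      (hΩ.fderiv_apply_eq_zero (hdiff (γ t)) (horth t))
  exact is_const_of_deriv_eq_zero (fun t => (hderiv t).differentiableAt)
    (fun t => (hderiv t).deriv) a b

lemma apply_householder_path_mul_eq [Finite n] [DecidableEq m] (hΩ : OrthogonallyMonotone Ω)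
    (hdiff : Differentiable ℝ Ω) {W : Matrix m n ℝ} {c c' : ℝ → m → ℝ}
    (hc : ∀ t, HasDerivAt c (c' t) t) (hc0 : ∀ t, c t ≠ 0)
    (hsymm : ∀ t, vecMulVec (c t ᵥ* W) (c' t ᵥ* W) = vecMulVec (c' t ᵥ* W) (c t ᵥ* W))
    (a b : ℝ) : Ω (householder (c a) * W) = Ω (householder (c b) * W) := by
  refine hΩ.apply_eq_of_transpose_mul_deriv_eq_zero hdiff
    (fun t => hasDerivAt_matrix_mul_const (hasDerivAt_householder (hc t) (hc0 t)) W)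
    (fun t => ?_) a b
  rw [Matrix.mul_assoc, transpose_householder_mul_mul, Matrix.smul_mul, Matrix.mul_smul,
    Matrix.sub_mul, Matrix.mul_sub, vecMulVec_mul, vecMulVec_mul, mul_vecMulVec, mul_vecMulVec,
    mulVec_transpose, mulVec_transpose, hsymm, sub_self, smul_zero]

variable [Fintype n]

lemma apply_householder_mul [DecidableEq m] (hΩ : OrthogonallyMonotone Ω)
    (hdiff : Differentiable ℝ Ω) (hcard : Fintype.card n < Fintype.card m) (v : m → ℝ)
    (W : Matrix m n ℝ) : Ω (householder v * W) = Ω W := by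
  by_cases hv : v ᵥ* W = 0
  · rw [householder_mul_of_vecMul_eq_zero hv]
  obtain ⟨u, hu0, huW⟩ := exists_ne_zero_vecMul_eq_zero hcard W
  let c (t : ℝ) : m → ℝ := u + t • (v - u)
  have hc (t : ℝ) : HasDerivAt c (v - u) t :=
    (((hasDerivAt_id t).smul_const (v - u)).const_add u).congr_deriv (one_smul ℝ (v - u))
  have hc'W : (v - u) ᵥ* W = v ᵥ* W := by rw [sub_vecMul, huW, sub_zero]
  have hcW (t : ℝ) : c t ᵥ* W = t • (v ᵥ* W) := by
    rw [add_vecMul, smul_vecMul, huW, zero_add, hc'W]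
  have hc0 (t : ℝ) (hct : c t = 0) : False := by
    have htv : t • (v ᵥ* W) = 0 := by rw [← hcW, hct, zero_vecMul]
    obtain rfl : t = 0 := (smul_eq_zero.1 htv).resolve_right hv
    exact hu0 (by simpa only [c, zero_smul, add_zero] using hct)
  have hends := hΩ.apply_householder_path_mul_eq hdiff (W := W) hc hc0
    (fun t => by rw [hcW, hc'W, smul_vecMulVec, vecMulVec_smul]) 1 0
  simpa only [c, one_smul, add_sub_cancel, zero_smul, add_zero,
    householder_mul_of_vecMul_eq_zero huW] using hends

lemma apply_eq_of_gram_eq (hΩ : OrthogonallyMonotone Ω) (hdiff : Differentiable ℝ Ω)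
    (hcard : Fintype.card n < Fintype.card m) {W Z : Matrix m n ℝ} (hWZ : Wᵀ * W = Zᵀ * Z) :
    Ω W = Ω Z := by
  classical
  exact apply_eq_of_forall_apply_householder_mul_eq (hΩ.apply_householder_mul hdiff hcard) hWZ

lemma exists_gram_eq_add_vecMulVec (hΩ : OrthogonallyMonotone Ω)
    (hcard : Fintype.card n < Fintype.card m) (W : Matrix m n ℝ) (x : n → ℝ) :
    ∃ V, Vᵀ * V = Wᵀ * W + vecMulVec x x ∧ Ω W ≤ Ω V := by
  obtain ⟨u, huu, huW⟩ := exists_dotProduct_self_eq_one_vecMul_eq_zero hcard W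
  have horth : Wᵀ * vecMulVec u x = 0 := by
    rw [mul_vecMulVec, mulVec_transpose, huW, zero_vecMulVec]
  refine ⟨W + vecMulVec u x, ?_, hΩ W _ horth⟩
  rw [transpose_add_mul_add_of_transpose_mul_eq_zero horth, transpose_vecMulVec,
    vecMulVec_mul_vecMulVec, huu, one_smul]

lemma exists_gram_eq_add_of_posSemidef (hΩ : OrthogonallyMonotone Ω)
    (hcard : Fintype.card n < Fintype.card m) (W : Matrix m n ℝ) {C : Matrix n n ℝ}
    (hC : C.PosSemidef) : ∃ V, Vᵀ * V = Wᵀ * W + C ∧ Ω W ≤ Ω V := by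
  obtain ⟨k, x, rfl⟩ := posSemidef_iff_eq_sum_vecMulVec.1 hC
  induction k with
  | zero => exact ⟨W, by simp, le_rfl⟩
  | succ k ih =>
    obtain ⟨V, hV, hWV⟩ := ih (fun i => x i.castSucc)
      (posSemidef_iff_eq_sum_vecMulVec.2 ⟨_, _, rfl⟩)
    obtain ⟨V', hV', hVV'⟩ := hΩ.exists_gram_eq_add_vecMulVec hcard V (x (Fin.last k))
    refine ⟨V', ?_, hWV.trans hVV'⟩
    rw [hV', hV, Fin.sum_univ_castSucc, add_assoc]
    rfl

end OrthogonallyMonotone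

theorem stmt_13_general {m n : Type*} [Fintype m] [Fintype n]
    (hcard : Fintype.card n < Fintype.card m) (Ω : Matrix m n ℝ → ℝ) (hdiff : Differentiable ℝ Ω)
    (hΩ : OrthogonallyMonotone Ω) :
    ∃ h : Matrix n n ℝ → ℝ,
      (∀ A B : Matrix n n ℝ, A.PosSemidef → (B - A).PosSemidef → h A ≤ h B) ∧
      ∀ W : Matrix m n ℝ, Ω W = h (Wᵀ * W) := by
  have hfac : Function.FactorsThrough Ω (fun W => Wᵀ * W) :=
    fun _ _ hWZ => hΩ.apply_eq_of_gram_eq hdiff hcard hWZ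
  obtain ⟨h, rfl⟩ := (Function.factorsThrough_iff _).1 hfac
  refine ⟨h, fun A B hA hBA => ?_, fun W => rfl⟩
  obtain ⟨W, hW, -⟩ := hΩ.exists_gram_eq_add_of_posSemidef hcard 0 hA
  obtain ⟨V, hV, hWV⟩ := hΩ.exists_gram_eq_add_of_posSemidef hcard W hBA
  rw [transpose_zero, Matrix.zero_mul, zero_add] at hW
  rw [hW, add_sub_cancel] at hV
  simpa only [Function.comp_apply, hW, hV] using hWV

theorem stmt_13 {d n : ℕ} (hdn : 2 * n ≤ d) (Ω : Matrix (Fin d) (Fin n) ℝ → ℝ)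
    (hdiff : Differentiable ℝ Ω)
    (hmono : ∀ W P : Matrix (Fin d) (Fin n) ℝ, Wᵀ * P = 0 → Ω W ≤ Ω (W + P)) :
    ∃ h : Matrix (Fin n) (Fin n) ℝ → ℝ,
      (∀ A B : Matrix (Fin n) (Fin n) ℝ,
        A.PosSemidef → B.PosSemidef → (B - A).PosSemidef → h A ≤ h B) ∧
      ∀ W : Matrix (Fin d) (Fin n) ℝ, Ω W = h (Wᵀ * W) := by
  rcases n.eq_zero_or_pos with rfl | hn
  · exact ⟨fun _ => Ω 0, fun _ _ _ _ _ => le_rfl, fun W => congrArg Ω (Subsingleton.elim W 0)⟩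
  · obtain ⟨h, hh, hΩ⟩ := stmt_13_general (by simp; omega) Ω hdiff hmono
    exact ⟨h, fun A B hA _ => hh A B hA, hΩ⟩
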